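/- Let K ∈ ps(C) satisfy b(K) = 1, where b(K) is the distance of K from the origin. Let ω ⊂ Ω_{C°} be a Borel set with Δ(ω) = τ > 0. Then there is a constant c, depending only on C, Θ and τ, such that V_K^Θ(ω) < c. -/

import Mathlib

/-!
If every point of `∂Ω_{C°}` makes an angle at least `τ < π` with a unit vector `u ∈ int C°`,
then the ball of radius `sin τ` about `u` misses `∂C°`, hence is contained in `C°`. Pairing its
points with `y ∈ C` gives `⟪u, y⟫ ≤ -sin τ ‖y‖`. On the other hand, if `u` is an outer normal of `K`
at `x`, then comparing `x` with the points of `K` closest to the origin gives `-b(K) ≤ ⟪x, u⟫`. So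
the points of `ν_K⁻¹(ω)` have norm at most `b(K) / sin τ`, and the cone volume is at most the
`Θ`-measure of a bounded part of `C`, which is finite because the singularity `‖y‖ ^ (-q)` of `Θ`
at the origin is integrable for `q < n`.
-/

open MeasureTheory Set Filter
open scoped RealInnerProductSpace ENNReal Topology Pointwise NNReal

noncomputable section

abbrev En (n : ℕ) := EuclideanSpace ℝ (Fin n)

/-- `C` is a pointed closed convex cone with nonempty interior. -/
def IsGoodCone (n : ℕ) (C : Set (En n)) : Prop :=
  IsClosed C ∧ Convex ℝ C ∧ (∀ x ∈ C, ∀ r : ℝ, 0 ≤ r → r • x ∈ C) ∧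
    C ∩ (-C) = {0} ∧ (interior C).Nonempty

/-- The dual cone `C° = {x : ⟨x,y⟩ ≤ 0 ∀ y ∈ C}`. -/
def dualCone (n : ℕ) (C : Set (En n)) : Set (En n) := {x | ∀ y ∈ C, ⟪x, y⟫ ≤ 0}

/-- `Ω_C = S^{n-1} ∩ int C`. -/
def omegaC (n : ℕ) (C : Set (En n)) : Set (En n) := Metric.sphere 0 1 ∩ interior C

/-- `Ω_{C°} = S^{n-1} ∩ int C°`. -/
def omegaDual (n : ℕ) (C : Set (En n)) : Set (En n) :=
  Metric.sphere 0 1 ∩ interior (dualCone n C)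

/-- A pseudo-cone: nonempty closed convex set not containing `0` with `λK ⊆ K` for `λ ≥ 1`. -/
def IsPseudoCone (n : ℕ) (K : Set (En n)) : Prop :=
  K.Nonempty ∧ IsClosed K ∧ Convex ℝ K ∧ (0 : En n) ∉ K ∧ ∀ l : ℝ, 1 ≤ l → l • K ⊆ K

/-- The recession cone of `K`. -/
def recCone (n : ℕ) (K : Set (En n)) : Set (En n) :=
  {z | ∀ x ∈ K, ∀ t : ℝ, 0 ≤ t → x + t • z ∈ K}

/-- A `C`-pseudo-cone: a pseudo-cone with recession cone `C`. -/
def IsCPseudoCone (n : ℕ) (C K : Set (En n)) : Prop := IsPseudoCone n K ∧ recCone n K = C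

/-- The set of outer unit normal vectors of `K` at `x`. -/
def normalsAt (n : ℕ) (K : Set (En n)) (x : En n) : Set (En n) :=
  {u | ‖u‖ = 1 ∧ ∀ y ∈ K, ⟪y, u⟫ ≤ ⟪x, u⟫}

/-- `ν_K^{-1}(ω)`: the boundary points of `K` whose outer unit normal is unique and lies in `ω`. -/
def nuInv (n : ℕ) (K ω : Set (En n)) : Set (En n) :=
  {x | x ∈ frontier K ∧ ∃ u ∈ ω, normalsAt n K x = {u}}

open Classical in
/-- The outer unit normal map `ν_K` (junk value `0` where the normal is not unique). -/
def nuMap (n : ℕ) (K : Set (En n)) (x : En n) : En n :=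
  if h : ∃ u, normalsAt n K x = {u} then h.choose else 0

/-- `Δ(ω)`: the spherical (angular) distance of `ω` from the boundary of `Ω_{C°}`
(the relative boundary of `Ω_{C°}` in the unit sphere is `closure Ω_{C°} \ Ω_{C°}`,
since `Ω_{C°}` is relatively open in the sphere). -/
def sphereAngleDist (n : ℕ) (C ω : Set (En n)) : ℝ :=
  sInf {d | ∃ u ∈ ω, ∃ v ∈ closure (omegaDual n C) \ omegaDual n C,
    d = InnerProductGeometry.angle u v}

/-- `b(K)`: the distance of `K` from the origin. -/
def distOrigin (n : ℕ) (K : Set (En n)) : ℝ := Metric.infDist 0 K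

/-- `C^-(t) = C ∩ H^-(𝔳, t)`. -/
def Cminus (n : ℕ) (C : Set (En n)) (v : En n) (t : ℝ) : Set (En n) :=
  C ∩ {x | ⟪x, v⟫ ≤ t}

/-- The support function `h_K(u) = sup{⟨y,u⟩ : y ∈ K}`. -/
def suppFn (n : ℕ) (K : Set (En n)) (u : En n) : ℝ := sSup ((fun y => ⟪y, u⟫) '' K)

/-- `Θ : C∖{0} → (0,∞)` continuous and homogeneous of degree `-q`. -/
def IsThetaWeight (n : ℕ) (C : Set (En n)) (q : ℝ) (Θ : En n → ℝ) : Prop :=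
  ContinuousOn Θ (C \ {0}) ∧ (∀ y ∈ C \ {0}, 0 < Θ y) ∧
    ∀ y ∈ C \ {0}, ∀ r : ℝ, 0 < r → Θ (r • y) = r ^ (-q) * Θ y

/-- The `Θ`-weighted `n`-dimensional Hausdorff (Lebesgue) measure `H_Θ^n`. -/
def HTheta (n : ℕ) (Θ : En n → ℝ) : Measure (En n) :=
  volume.withDensity fun y => ENNReal.ofReal (Θ y)

/-- The `Θ`-weighted cone-volume measure `V_K^Θ(ω) = H_Θ^n(⋃_{x ∈ ν_K^{-1}(ω)} [0,x])`. -/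
def coneVol (n : ℕ) (Θ : En n → ℝ) (K ω : Set (En n)) : ℝ≥0∞ :=
  HTheta n Θ (⋃ x ∈ nuInv n K ω, segment ℝ (0 : En n) x)

/-- The (unweighted) cone-volume measure `V_K(ω) = H^n(⋃_{x ∈ ν_K^{-1}(ω)} [0,x])`. -/
def coneVolU (n : ℕ) (K ω : Set (En n)) : ℝ≥0∞ :=
  volume (⋃ x ∈ nuInv n K ω, segment ℝ (0 : En n) x)

/-- The `Θ`-weighted surface area measure `S_{n-1}^Θ(K,ω) = ∫_{ν_K^{-1}(ω)} Θ dH^{n-1}`. -/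
def surfTheta (n : ℕ) (Θ : En n → ℝ) (K ω : Set (En n)) : ℝ≥0∞ :=
  ∫⁻ x in nuInv n K ω, ENNReal.ofReal (Θ x) ∂(μH[(n : ℝ) - 1])

/-- `K ∈ K(C,ϖ)`: `K` is a `C`-pseudo-cone that is `C`-determined by `ϖ`. -/
def CDetermined (n : ℕ) (C ϖ K : Set (En n)) : Prop :=
  IsCPseudoCone n C K ∧ K = C ∩ ⋂ u ∈ ϖ, {x | ⟪x, u⟫ ≤ suppFn n K u}

/-- The Wulff shape `[g] = C ∩ ⋂_{u ∈ ϖ} {y : ⟨y,u⟩ ≤ -g(u)}`. -/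
def wulff (n : ℕ) (C ϖ : Set (En n)) (g : En n → ℝ) : Set (En n) :=
  C ∩ ⋂ u ∈ ϖ, {y | ⟪y, u⟫ ≤ -g u}

/-- The `Θ`-weighted covolume `V_Θ(K) = ∫_{C∖K} Θ dH^n`. -/
def covol (n : ℕ) (Θ : En n → ℝ) (C K : Set (En n)) : ℝ≥0∞ := HTheta n Θ (C \ K)

/-- The radial function `ρ_K(v) = min{λ : λv ∈ K}`. -/
def rho (n : ℕ) (K : Set (En n)) (v : En n) : ℝ := sInf {t : ℝ | t • v ∈ K}

/-- The radial map `r_K(v) = ρ_K(v) v`. -/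
def radMap (n : ℕ) (K : Set (En n)) (v : En n) : En n := rho n K v • v

/-- `α_K^{-1}(ω)`: directions `v ∈ Ω_C` with `r_K(v) ∈ ∂'K` (boundary point in `int C` with
unique outer normal) whose unique outer normal lies in `ω`. -/
def alphaInv (n : ℕ) (C K ω : Set (En n)) : Set (En n) :=
  {v ∈ omegaC n C | radMap n K v ∈ frontier K ∧ radMap n K v ∈ interior C ∧
    ∃ u ∈ ω, normalsAt n K (radMap n K v) = {u}}

/-- `μ` is the Borel measure on `Ω_{C°}` representing the `Θ`-weighted cone-volume
measure of `K` (extended by `0` outside `Ω_{C°}`). -/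
def RepsConeVol (n : ℕ) (C : Set (En n)) (Θ : En n → ℝ) (K : Set (En n))
    (μ : Measure (En n)) : Prop :=
  μ (omegaDual n C)ᶜ = 0 ∧
    ∀ ω, MeasurableSet ω → ω ⊆ omegaDual n C → μ ω = coneVol n Θ K ω

/-- `μ` is the Borel measure on `Ω_{C°}` representing the `Θ`-weighted surface area
measure of `K` (extended by `0` outside `Ω_{C°}`). -/
def RepsSurf (n : ℕ) (C : Set (En n)) (Θ : En n → ℝ) (K : Set (En n))
    (μ : Measure (En n)) : Prop :=
  μ (omegaDual n C)ᶜ = 0 ∧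
    ∀ ω, MeasurableSet ω → ω ⊆ omegaDual n C → μ ω = surfTheta n Θ K ω

open InnerProductGeometry NormedSpace

theorem subset_interior_of_disjoint_frontier {X : Type*} [TopologicalSpace X] {s t : Set X}
    (hs : IsPreconnected s) (hst : (s ∩ interior t).Nonempty) (hdisj : Disjoint s (frontier t)) :
    s ⊆ interior t := by
  refine hs.subset_of_closure_inter_subset isOpen_interior hst fun x hx ↦ ?_
  by_contra hxt
  exact hdisj.notMem_of_mem_left hx.2 ⟨closure_mono interior_subset hx.1, hxt⟩

section NormedSpace

variable {E : Type*} [NormedAddCommGroup E] [NormedSpace ℝ E] {D : Set E}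

theorem smul_mem_interior_of_forall_smul_mem (hsmul : ∀ c : ℝ, 0 < c → ∀ x ∈ D, c • x ∈ D)
    {c : ℝ} (hc : 0 < c) {x : E} (hx : x ∈ interior D) : c • x ∈ interior D := by
  have hsub : c • D ⊆ D := smul_set_subset_iff.2 fun x hx ↦ hsmul c hc x hx
  exact interior_mono hsub (interior_smul₀ hc.ne' D ▸ smul_mem_smul_set hx)

theorem normalize_mem_sphere_inter_interior_iff (hsmul : ∀ c : ℝ, 0 < c → ∀ x ∈ D, c • x ∈ D)
    {x : E} (hx : x ≠ 0) :
    normalize x ∈ Metric.sphere 0 1 ∩ interior D ↔ x ∈ interior D := by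
  have hpos : 0 < ‖x‖ := norm_pos_iff.2 hx
  refine ⟨fun h ↦ ?_, fun h ↦ ⟨?_, smul_mem_interior_of_forall_smul_mem hsmul (inv_pos.2 hpos) h⟩⟩
  · simpa only [norm_smul_normalize] using smul_mem_interior_of_forall_smul_mem hsmul hpos h.2
  · exact mem_sphere_zero_iff_norm.2 (norm_normalize_eq_one_iff.2 hx)

theorem normalize_mem_closure_sphere_inter_interior_diff (hconv : Convex ℝ D)
    (hsmul : ∀ c : ℝ, 0 < c → ∀ x ∈ D, c • x ∈ D) (hne : (interior D).Nonempty)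
    {w : E} (hw : w ∈ frontier D) (hw0 : w ≠ 0) :
    normalize w ∈ closure (Metric.sphere 0 1 ∩ interior D) \ (Metric.sphere 0 1 ∩ interior D) := by
  refine ⟨?_, (normalize_mem_sphere_inter_interior_iff hsmul hw0).not.2 hw.2⟩
  have hwcl : w ∈ closure ({0}ᶜ ∩ interior D) := by
    refine isOpen_compl_singleton.inter_closure ⟨hw0, ?_⟩
    rw [hconv.closure_interior_eq_closure_of_nonempty_interior hne]
    exact hw.1
  have hcont : ContinuousAt (normalize : E → E) w :=
    (continuousAt_id.norm.inv₀ (norm_ne_zero_iff.2 hw0)).smul continuousAt_id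
  exact hcont.continuousWithinAt.mem_closure hwcl fun x hx ↦
    (normalize_mem_sphere_inter_interior_iff hsmul hx.1).2 hx.2

end NormedSpace

section InnerProductSpace

variable {E : Type*} [NormedAddCommGroup E] [InnerProductSpace ℝ E]

theorem norm_mul_sin_le_norm_sub {u w : E} {τ : ℝ} (hτ0 : 0 ≤ τ) (hangle : τ ≤ angle u w) :
    ‖u‖ * Real.sin τ ≤ ‖u - w‖ := by
  have hcos : Real.cos (angle u w) ≤ Real.cos τ :=
    Real.cos_le_cos_of_nonneg_of_le_pi hτ0 (angle_le_pi u w) hangle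
  have hinner : ⟪u, w⟫ ≤ ‖u‖ * ‖w‖ * Real.cos τ := by
    rw [← cos_angle_mul_norm_mul_norm u w, mul_comm]
    gcongr
  refine le_of_sq_le_sq ?_ (norm_nonneg _)
  calc (‖u‖ * Real.sin τ) ^ 2
      ≤ (‖u‖ * Real.sin τ) ^ 2 + (‖w‖ - ‖u‖ * Real.cos τ) ^ 2 :=
      le_add_of_nonneg_right (sq_nonneg _)
    _ = ‖u‖ ^ 2 - 2 * (‖u‖ * ‖w‖ * Real.cos τ) + ‖w‖ ^ 2 := by
      linear_combination ‖u‖ ^ 2 * Real.sin_sq_add_cos_sq τ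
    _ ≤ ‖u‖ ^ 2 - 2 * ⟪u, w⟫ + ‖w‖ ^ 2 := by gcongr
    _ = ‖u - w‖ ^ 2 := (norm_sub_sq_real u w).symm

theorem closedBall_sin_subset_of_le_angle {D : Set E} (hcl : IsClosed D) (hconv : Convex ℝ D)
    (hsmul : ∀ c : ℝ, 0 < c → ∀ x ∈ D, c • x ∈ D) {u : E}
    (hu : u ∈ Metric.sphere 0 1 ∩ interior D) {τ : ℝ} (hτ0 : 0 < τ) (hτ : τ < Real.pi)
    (hangle : ∀ v ∈ closure (Metric.sphere 0 1 ∩ interior D) \ (Metric.sphere 0 1 ∩ interior D),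
      τ ≤ angle u v) :
    Metric.closedBall u (Real.sin τ) ⊆ D := by
  have hsin : 0 < Real.sin τ := Real.sin_pos_of_pos_of_lt_pi hτ0 hτ
  have hu1 : ‖u‖ = 1 := mem_sphere_zero_iff_norm.1 hu.1
  have hsin_le : ∀ w ∈ frontier D, Real.sin τ ≤ ‖u - w‖ := by
    intro w hw
    rcases eq_or_ne w 0 with rfl | hw0
    · simpa only [sub_zero, hu1] using Real.sin_le_one τ
    · have hw_angle : τ ≤ angle u w := by
        have h := hangle _
          (normalize_mem_closure_sphere_inter_interior_diff hconv hsmul ⟨u, hu.2⟩ hw hw0)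
        have hinv : 0 < ‖w‖⁻¹ := inv_pos.2 (norm_pos_iff.2 hw0)
        rwa [NormedSpace.normalize, angle_smul_right_of_pos _ _ hinv] at h
      simpa only [hu1, one_mul] using norm_mul_sin_le_norm_sub hτ0.le hw_angle
  have hdisj : Disjoint (Metric.ball u (Real.sin τ)) (frontier D) :=
    Set.disjoint_left.2 fun w hwu hw ↦ (mem_ball_iff_norm'.1 hwu).not_ge (hsin_le w hw)
  have hball : Metric.ball u (Real.sin τ) ⊆ interior D :=
    subset_interior_of_disjoint_frontier (convex_ball u _).isPreconnected
      ⟨u, Metric.mem_ball_self hsin, hu.2⟩ hdisj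
  rw [← closure_ball u hsin.ne']
  exact closure_minimal (hball.trans interior_subset) hcl

theorem inner_le_neg_mul_norm_of_closedBall {u y : E} {r : ℝ} (hr : 0 ≤ r)
    (hball : ∀ x ∈ Metric.closedBall u r, ⟪x, y⟫ ≤ 0) : ⟪u, y⟫ ≤ -(r * ‖y‖) := by
  rcases eq_or_ne y 0 with rfl | hy
  · simp
  have hmem : u + r • normalize y ∈ Metric.closedBall u r := by
    simp [norm_smul, norm_normalize_eq_one_iff.2 hy, abs_of_nonneg hr]
  have hinner : ⟪normalize y, y⟫ = ‖y‖ := by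
    rw [NormedSpace.normalize, real_inner_smul_left, real_inner_self_eq_norm_mul_norm,
      inv_mul_cancel_left₀ (norm_ne_zero_iff.2 hy)]
  have h := hball _ hmem
  rw [inner_add_left, real_inner_smul_left, hinner] at h
  linarith

end InnerProductSpace

section Homogeneous

variable {E F : Type*} [NormedAddCommGroup E] [NormedSpace ℝ E] [FiniteDimensional ℝ E]
  [NormedAddCommGroup F] [NormedSpace ℝ F] {C : Set E} {f : E → F} {q : ℝ}

theorem exists_norm_le_mul_norm_rpow_neg (hC : IsClosed C)
    (hsmul : ∀ x ∈ C, ∀ r : ℝ, 0 < r → r • x ∈ C) (hcont : ContinuousOn f (C \ {0}))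
    (hhom : ∀ y ∈ C \ {0}, ∀ r : ℝ, 0 < r → f (r • y) = r ^ (-q) • f y) :
    ∃ M : ℝ, ∀ y ∈ C \ {0}, ‖f y‖ ≤ M * ‖y‖ ^ (-q) := by
  have hcompact : IsCompact (C ∩ Metric.sphere (0 : E) 1) := (isCompact_sphere 0 1).inter_left hC
  have hsub : C ∩ Metric.sphere (0 : E) 1 ⊆ C \ {0} := fun x hx ↦
    ⟨hx.1, ne_zero_of_mem_unit_sphere ⟨x, hx.2⟩⟩
  obtain ⟨M, hM⟩ := hcompact.exists_bound_of_continuousOn (hcont.mono hsub)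
  refine ⟨M, fun y hy ↦ ?_⟩
  have hpos : 0 < ‖y‖ := norm_pos_iff.2 hy.2
  have hz : normalize y ∈ C ∩ Metric.sphere (0 : E) 1 :=
    ⟨hsmul y hy.1 _ (inv_pos.2 hpos),
      mem_sphere_zero_iff_norm.2 (norm_normalize_eq_one_iff.2 hy.2)⟩
  calc ‖f y‖ = ‖f (‖y‖ • normalize y)‖ := by rw [norm_smul_normalize]
    _ = ‖y‖ ^ (-q) * ‖f (normalize y)‖ := by
      rw [hhom _ (hsub hz) _ hpos, norm_smul, Real.norm_of_nonneg (by positivity)]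
    _ ≤ ‖y‖ ^ (-q) * M := by gcongr; exact hM _ hz
    _ = M * ‖y‖ ^ (-q) := mul_comm _ _

theorem integrableOn_inter_ball_of_homogeneous [MeasurableSpace E] [BorelSpace E] (μ : Measure E)
    [μ.IsAddHaarMeasure] (hd : 1 ≤ Module.finrank ℝ E) (hq : q < Module.finrank ℝ E)
    (hC : IsClosed C) (hsmul : ∀ x ∈ C, ∀ r : ℝ, 0 < r → r • x ∈ C)
    (hcont : ContinuousOn f (C \ {0}))
    (hhom : ∀ y ∈ C \ {0}, ∀ r : ℝ, 0 < r → f (r • y) = r ^ (-q) • f y) (R : ℝ) :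
    IntegrableOn f (C ∩ Metric.ball 0 R) μ := by
  have : Nontrivial E := Module.nontrivial_of_finrank_pos (R := ℝ) hd
  have hmeas : MeasurableSet (C \ {0}) := hC.measurableSet.diff (measurableSet_singleton 0)
  obtain ⟨M, hM⟩ := exists_norm_le_mul_norm_rpow_neg hC hsmul hcont hhom
  have hae : (C \ {0} : Set E) =ᵐ[μ] C := sdiff_null_ae_eq_self (measure_singleton 0)
  have hdecay : ∀ y, ‖(C \ {0}).indicator f y‖ ≤ |M| * ‖y‖ ^ (-q) := by
    intro y
    by_cases hy : y ∈ C \ {0}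
    · rw [indicator_of_mem hy]
      exact (hM y hy).trans (by gcongr; exact le_abs_self M)
    · rw [indicator_of_notMem hy, norm_zero]
      positivity
  have hball : IntegrableOn ((C \ {0}).indicator f) (Metric.ball 0 R) μ :=
    integrableOn_ball_of_norm_le_rpow hd hq (.of_forall hdecay)
      ((aestronglyMeasurable_indicator_iff hmeas).2 (hcont.aestronglyMeasurable hmeas))
  have hdiff : IntegrableOn f (C \ {0} ∩ Metric.ball 0 R) μ := by
    rwa [IntegrableOn, integrable_indicator_iff hmeas, IntegrableOn,
      Measure.restrict_restrict hmeas] at hball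
  exact hdiff.congr_set_ae (hae.inter .rfl).symm

end Homogeneous

section PseudoCone

variable {n : ℕ} {C K ω : Set (En n)}

theorem dualCone_eq_neg_innerDual (C : Set (En n)) :
    dualCone n C = -(ProperCone.innerDual C : Set (En n)) := by
  ext x
  simp [dualCone, real_inner_comm]

theorem isClosed_dualCone (C : Set (En n)) : IsClosed (dualCone n C) := by
  rw [dualCone_eq_neg_innerDual]
  exact (ProperCone.innerDual C).isClosed.neg

theorem convex_dualCone (C : Set (En n)) : Convex ℝ (dualCone n C) := by
  rw [dualCone_eq_neg_innerDual]
  exact (ProperCone.innerDual C).toPointedCone.convex.neg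

theorem smul_mem_dualCone {c : ℝ} (hc : 0 ≤ c) {x : En n} (hx : x ∈ dualCone n C) :
    c • x ∈ dualCone n C := fun y hy ↦ by
  rw [real_inner_smul_left]
  exact mul_nonpos_of_nonneg_of_nonpos hc (hx y hy)

theorem IsCPseudoCone.subset (hK : IsCPseudoCone n C K) : K ⊆ C := by
  obtain ⟨⟨_, hcl, hconv, _, hsmul⟩, hrec⟩ := hK
  rw [← hrec]
  intro z hz x hx t ht
  have hasymp : z ∈ asymptoticCone ℝ K := by
    have htendsto := tendsto_id.atTop_smul_const_tendsto_asymptoticNhds (k := ℝ) z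
    refine htendsto.frequently (Eventually.frequently ?_)
    filter_upwards [eventually_ge_atTop 1] with l hl
    exact hsmul l hl (smul_mem_smul_set hz)
  simpa only [vadd_eq_add, add_comm] using
    hconv.smul_vadd_mem_of_isClosed_of_mem_asymptoticCone hcl ht hasymp hx

theorem sphereAngleDist_le_angle {u v : En n} (hu : u ∈ ω)
    (hv : v ∈ closure (omegaDual n C) \ omegaDual n C) : sphereAngleDist n C ω ≤ angle u v := by
  refine csInf_le ⟨0, ?_⟩ ⟨u, hu, v, hv, rfl⟩
  rintro _ ⟨a, _, b, _, rfl⟩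
  exact angle_nonneg a b

theorem inner_le_neg_sin_mul_norm (hω : ω ⊆ omegaDual n C) {τ : ℝ} (hτ0 : 0 < τ)
    (hτ : τ < Real.pi) (hΔ : τ ≤ sphereAngleDist n C ω) {u y : En n} (hu : u ∈ ω)
    (hy : y ∈ C) : ⟪u, y⟫ ≤ -(Real.sin τ * ‖y‖) := by
  have hball : Metric.closedBall u (Real.sin τ) ⊆ dualCone n C :=
    closedBall_sin_subset_of_le_angle (isClosed_dualCone C) (convex_dualCone C)
      (fun _ hc _ hx ↦ smul_mem_dualCone hc.le hx) (hω hu) hτ0 hτ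
      fun _ hv ↦ hΔ.trans (sphereAngleDist_le_angle hu hv)
  exact inner_le_neg_mul_norm_of_closedBall
    (Real.sin_pos_of_pos_of_lt_pi hτ0 hτ).le fun x hx ↦ hball hx y hy

theorem neg_distOrigin_le_inner (hK : K.Nonempty) {x u : En n} (hu : u ∈ normalsAt n K x) :
    -distOrigin n K ≤ ⟪x, u⟫ := by
  refine neg_le.2 ((Metric.le_infDist hK).2 fun y hy ↦ ?_)
  calc -⟪x, u⟫ ≤ -⟪y, u⟫ := neg_le_neg (hu.2 y hy)
    _ ≤ ‖y‖ * ‖u‖ := (neg_le_abs _).trans (abs_real_inner_le_norm y u)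
    _ = dist 0 y := by rw [hu.1, mul_one, dist_zero_left]

theorem norm_le_distOrigin_div_sin (hC : IsClosed C) (hKC : K ⊆ C) (hω : ω ⊆ omegaDual n C)
    {τ : ℝ} (hτ0 : 0 < τ) (hτ : τ < Real.pi) (hΔ : τ ≤ sphereAngleDist n C ω) {x : En n}
    (hx : x ∈ nuInv n K ω) : ‖x‖ ≤ distOrigin n K / Real.sin τ := by
  obtain ⟨hxK, u, huω, hu⟩ := hx
  have hxC : x ∈ C := closure_minimal hKC hC hxK.1
  have hupper := inner_le_neg_sin_mul_norm hω hτ0 hτ hΔ huω hxC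
  have hlower := neg_distOrigin_le_inner (closure_nonempty_iff.1 ⟨x, hxK.1⟩)
    (hu.symm ▸ mem_singleton u)
  rw [real_inner_comm] at hlower
  rw [le_div_iff₀' (Real.sin_pos_of_pos_of_lt_pi hτ0 hτ)]
  linarith

theorem coneVol_le_HTheta (hC : IsClosed C) (hsmul : ∀ x ∈ C, ∀ r : ℝ, 0 ≤ r → r • x ∈ C)
    (hKC : K ⊆ C) {R : ℝ} (hR : ∀ x ∈ nuInv n K ω, ‖x‖ ≤ R) (Θ : En n → ℝ) :
    coneVol n Θ K ω ≤ HTheta n Θ (C ∩ Metric.closedBall 0 R) := by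
  refine measure_mono (iUnion₂_subset fun x hx ↦ ?_)
  have hxC : x ∈ C := closure_minimal hKC hC hx.1.1
  rw [segment_eq_image]
  rintro _ ⟨t, ht, rfl⟩
  refine ⟨by simpa using hsmul x hxC t ht.1, ?_⟩
  have htx : t * ‖x‖ ≤ R := (mul_le_of_le_one_left (norm_nonneg x) ht.2).trans (hR x hx)
  simpa [norm_smul, abs_of_nonneg ht.1] using htx

theorem HTheta_inter_closedBall_lt_top (hn : 1 ≤ n) {q : ℝ} (hq : q < n) (hC : IsClosed C)
    (hsmul : ∀ x ∈ C, ∀ r : ℝ, 0 < r → r • x ∈ C) {Θ : En n → ℝ} (hΘ : IsThetaWeight n C q Θ)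
    (R : ℝ) : HTheta n Θ (C ∩ Metric.closedBall 0 R) < ∞ := by
  have hint : IntegrableOn Θ (C ∩ Metric.ball 0 (R + 1)) :=
    integrableOn_inter_ball_of_homogeneous volume (by simpa using hn) (by simpa using hq) hC hsmul
      hΘ.1 hΘ.2.2 (R + 1)
  have hsub : C ∩ Metric.closedBall 0 R ⊆ C ∩ Metric.ball 0 (R + 1) :=
    inter_subset_inter_right C (Metric.closedBall_subset_ball (lt_add_one R))
  rw [HTheta, withDensity_apply _ (hC.inter Metric.isClosed_closedBall).measurableSet]
  exact (hint.mono_set hsub).lintegral_lt_top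

end PseudoCone

theorem statement7_general {n : ℕ} (hn : 1 ≤ n) {C : Set (En n)} (hC : IsClosed C)
    (hsmul : ∀ x ∈ C, ∀ r : ℝ, 0 ≤ r → r • x ∈ C) {q : ℝ} (hq : q < n) {Θ : En n → ℝ}
    (hΘ : IsThetaWeight n C q Θ) {τ : ℝ} (hτ : 0 < τ) (b : ℝ) :
    ∃ c : ℝ, 0 < c ∧ ∀ K ω : Set (En n), K ⊆ C → distOrigin n K ≤ b → ω ⊆ omegaDual n C →
      τ ≤ sphereAngleDist n C ω → coneVol n Θ K ω < ENNReal.ofReal c := by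
  set τ' := min τ (Real.pi / 2)
  have hτ'0 : 0 < τ' := lt_min hτ Real.pi_div_two_pos
  have hτ' : τ' < Real.pi := (min_le_right _ _).trans_lt (half_lt_self Real.pi_pos)
  have hsin : 0 < Real.sin τ' := Real.sin_pos_of_pos_of_lt_pi hτ'0 hτ'
  set V := HTheta n Θ (C ∩ Metric.closedBall 0 (b / Real.sin τ'))
  have hV : V < ∞ :=
    HTheta_inter_closedBall_lt_top hn hq hC (fun x hx r hr ↦ hsmul x hx r hr.le) hΘ _
  refine ⟨V.toReal + 1, by positivity, fun K ω hKC hb hω hΔ ↦ ?_⟩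
  have hnorm : ∀ x ∈ nuInv n K ω, ‖x‖ ≤ b / Real.sin τ' := fun x hx ↦
    (norm_le_distOrigin_div_sin hC hKC hω hτ'0 hτ' ((min_le_left _ _).trans hΔ) hx).trans
      (by gcongr)
  calc coneVol n Θ K ω ≤ V := coneVol_le_HTheta hC hsmul hKC hnorm Θ
    _ < ENNReal.ofReal (V.toReal + 1) :=
      (ENNReal.lt_ofReal_iff_toReal_lt hV.ne).2 (lt_add_one _)

/-- If `K ∈ ps(C)` with `b(K) = 1` and `ω ⊆ Ω_{C°}` is a Borel set with
`Δ(ω) = τ > 0`, then `V_K^Θ(ω) < c` with a constant `c` depending only on `C`, `Θ`, `τ`. -/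
theorem statement7 (n : ℕ) (hn : 2 ≤ n) (C : Set (En n)) (hC : IsGoodCone n C)
    (q : ℝ) (hq1 : (n : ℝ) - 1 < q) (hq2 : q < n)
    (Θ : En n → ℝ) (hΘ : IsThetaWeight n C q Θ)
    (τ : ℝ) (hτ : 0 < τ) :
    ∃ c : ℝ, 0 < c ∧ ∀ K ω : Set (En n), IsCPseudoCone n C K → distOrigin n K = 1 →
      MeasurableSet ω → ω ⊆ omegaDual n C → sphereAngleDist n C ω = τ →
      coneVol n Θ K ω < ENNReal.ofReal c := by
  obtain ⟨c, hc, hbound⟩ := statement7_general (by omega) hC.1 hC.2.2.1 hq2 hΘ hτ 1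
  exact ⟨c, hc, fun K ω hK hb _ hω hΔ ↦ hbound K ω hK.subset hb.le hω hΔ.ge⟩
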